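/- For λ∈ba(𝒜) the following properties are equivalent: (i) the convex hull of every bounded subset of L⁰(λ) is bounded in L⁰(λ); (ii) λ is strongly discontinuous; (iii) L⁰(λ), with the topology induced by the metric d, is a locally convex topological vector space. -/

import Mathlib

open Set Filter Topology

namespace FA

/-- An algebra of subsets of `Ω`. -/
structure SetAlg (Ω : Type*) where
  sets : Set (Set Ω)
  empty_mem : ∅ ∈ sets
  compl_mem : ∀ ⦃A⦄, A ∈ sets → Aᶜ ∈ sets
  union_mem : ∀ ⦃A B⦄, A ∈ sets → B ∈ sets → A ∪ B ∈ sets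

/-- A bounded, finitely additive real-valued set function on the algebra `𝒜`,
i.e. an element of `ba(𝒜)`. -/
structure BAMeasure {Ω : Type*} (𝒜 : SetAlg Ω) where
  toFun : Set Ω → ℝ
  map_empty : toFun ∅ = 0
  additive : ∀ ⦃A B : Set Ω⦄, A ∈ 𝒜.sets → B ∈ 𝒜.sets → Disjoint A B →
      toFun (A ∪ B) = toFun A + toFun B
  bounded : ∃ M : ℝ, ∀ A ∈ 𝒜.sets, |toFun A| ≤ M

variable {Ω : Type*} {𝒜 : SetAlg Ω}

/-- Total variation `|λ|(A) = λ⁺(A) + λ⁻(A)`. -/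
noncomputable def var (lam : BAMeasure 𝒜) (A : Set Ω) : ℝ :=
  sSup {x | ∃ B ∈ 𝒜.sets, B ⊆ A ∧ x = lam.toFun B} +
  sSup {x | ∃ B ∈ 𝒜.sets, B ⊆ A ∧ x = -lam.toFun B}

/-- The outer measure `|λ|*(B) = inf {|λ|(A) : A ∈ 𝒜, B ⊆ A}`. -/
noncomputable def outer (lam : BAMeasure 𝒜) (B : Set Ω) : ℝ :=
  sInf {x | ∃ A ∈ 𝒜.sets, B ⊆ A ∧ x = var lam A}

/-- `𝒜`-simple functions. -/
def IsSimple (𝒜 : SetAlg Ω) (f : Ω → ℝ) : Prop :=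
  (Set.range f).Finite ∧ ∀ r : ℝ, f ⁻¹' {r} ∈ 𝒜.sets

/-- `λ`-convergence: `(f n)` converges to `g` in `λ`-measure. -/
def LConv (lam : BAMeasure 𝒜) (f : ℕ → Ω → ℝ) (g : Ω → ℝ) : Prop :=
  ∀ c > (0:ℝ), Tendsto (fun n => outer lam {ω | c < |f n ω - g ω|}) atTop (𝓝 0)

/-- `λ`-Cauchy sequences. -/
def LCauchy (lam : BAMeasure 𝒜) (f : ℕ → Ω → ℝ) : Prop :=
  ∀ c > (0:ℝ), ∀ ε > (0:ℝ), ∃ N : ℕ, ∀ p q : ℕ,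
    outer lam {ω | c < |f (N + p) ω - f (N + q) ω|} < ε

/-- `L⁰(λ)`: `λ`-limits of sequences of `𝒜`-simple functions. -/
def L0 (lam : BAMeasure 𝒜) : Set (Ω → ℝ) :=
  {f | ∃ s : ℕ → Ω → ℝ, (∀ n, IsSimple 𝒜 (s n)) ∧ LConv lam s f}

/-- The metric of `L⁰(λ)`: `d(f,g) = inf {c + |λ|*(|f-g| ≥ c) : c > 0}`. -/
noncomputable def dL0 (lam : BAMeasure 𝒜) (f g : Ω → ℝ) : ℝ :=
  sInf {x | ∃ c > (0:ℝ), x = c + outer lam {ω | c ≤ |f ω - g ω|}}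

/-- A set `K` is bounded in `L⁰(λ)` if `lim_{c→∞} sup_{f∈K} |λ|*(|f|>c) = 0`. -/
def BddL0 (lam : BAMeasure 𝒜) (K : Set (Ω → ℝ)) : Prop :=
  ∀ ε > (0:ℝ), ∃ c₀ : ℝ, ∀ c ≥ c₀, ∀ f ∈ K, outer lam {ω | c < |f ω|} < ε

/-- The nonnegative elements of `L⁰(λ)`. -/
def L0pos (lam : BAMeasure 𝒜) : Set (Ω → ℝ) := {f ∈ L0 lam | ∀ ω, 0 ≤ f ω}

/-- The elementary integral of a simple function with respect to a set function. -/
noncomputable def simpleIntegral (m : Set Ω → ℝ) (f : Ω → ℝ) : ℝ :=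
  ∑ᶠ r : ℝ, r * m (f ⁻¹' {r})

/-- Dunford–Schwartz integrability: there is a sequence of simple functions converging to `f`
in `λ`-measure which is Cauchy in mean. -/
def MemL1 (lam : BAMeasure 𝒜) (f : Ω → ℝ) : Prop :=
  ∃ s : ℕ → Ω → ℝ, (∀ n, IsSimple 𝒜 (s n)) ∧ LConv lam s f ∧
    ∀ ε > (0:ℝ), ∃ N : ℕ, ∀ m ≥ N, ∀ n ≥ N,
      simpleIntegral (var lam) (fun ω => |s m ω - s n ω|) < ε

/-- `L¹(λ)`. -/
def L1 (lam : BAMeasure 𝒜) : Set (Ω → ℝ) := {f | MemL1 lam f}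

open scoped Classical in
/-- The Dunford–Schwartz integral `∫ f dλ`. -/
noncomputable def integral (lam : BAMeasure 𝒜) (f : Ω → ℝ) : ℝ :=
  if h : MemL1 lam f then
    limUnder atTop (fun n => simpleIntegral lam.toFun (h.choose n))
  else 0

open scoped Classical in
/-- The `L¹(λ)` seminorm `∫ |f| d|λ|`. -/
noncomputable def l1Norm (lam : BAMeasure 𝒜) (f : Ω → ℝ) : ℝ :=
  if h : MemL1 lam f then
    limUnder atTop (fun n => simpleIntegral (var lam) (fun ω => |h.choose n ω|))
  else 0

/-- A set is bounded in `L¹(μ)` if the integrals `∫|f| d|μ|` are uniformly bounded. -/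
def BddL1 (mu : BAMeasure 𝒜) (K : Set (Ω → ℝ)) : Prop :=
  ∃ M : ℝ, ∀ f ∈ K, l1Norm mu f ≤ M

/-- Finitely additive probability measures. -/
def IsFAProb (mu : BAMeasure 𝒜) : Prop :=
  mu.toFun Set.univ = 1 ∧ ∀ A ∈ 𝒜.sets, 0 ≤ mu.toFun A

/-- `μ ∈ 𝔓_*(λ)`: a finitely additive probability with `|μ| ≤ c |λ|` and the same null
sets as `λ`. -/
def PStar (lam mu : BAMeasure 𝒜) : Prop :=
  IsFAProb mu ∧ (∃ c : ℝ, 0 ≤ c ∧ ∀ A ∈ 𝒜.sets, var mu A ≤ c * var lam A) ∧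
  ∀ A ∈ 𝒜.sets, (mu.toFun A = 0 ↔ var lam A = 0)

/-- `μ ∈ 𝔓_*(λ; K)`. -/
def PStarWith (lam : BAMeasure 𝒜) (K : Set (Ω → ℝ)) (mu : BAMeasure 𝒜) : Prop :=
  PStar lam mu ∧ K ⊆ L1 mu ∧ BddL1 mu K

/-- `f` is a `λ`-a.s. lower bound of `K`. -/
def ASLowerBound (lam : BAMeasure 𝒜) (f : Ω → ℝ) (K : Set (Ω → ℝ)) : Prop :=
  ∀ c > (0:ℝ), ∀ k ∈ K, outer lam {ω | k ω < f ω - c} = 0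

/-- Absolute continuity `μ ≪ λ` for bounded finitely additive set functions. -/
def AbsCont (mu lam : BAMeasure 𝒜) : Prop :=
  ∀ ε > (0:ℝ), ∃ δ > (0:ℝ), ∀ A ∈ 𝒜.sets, var lam A < δ → var mu A < ε

/-- `λ ∈ ba₀(𝒜)`: the range of `λ` is finite. -/
def FiniteRange (lam : BAMeasure 𝒜) : Prop := (lam.toFun '' 𝒜.sets).Finite

/-- `μ ∈ ba₀(λ)`. -/
def BA0rel (lam mu : BAMeasure 𝒜) : Prop := FiniteRange mu ∧ AbsCont mu lam

/-- Strong continuity: arbitrarily fine finite partitions. -/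
def StronglyContinuous (lam : BAMeasure 𝒜) : Prop :=
  ∀ ε > (0:ℝ), ∃ (N : ℕ) (A : Fin N → Set Ω), (∀ n, A n ∈ 𝒜.sets) ∧
    Pairwise (Function.onFun Disjoint A) ∧ (⋃ n, A n) = Set.univ ∧
    ∀ n, var lam (A n) < ε

/-- Orthogonality of bounded finitely additive set functions. -/
def Orthogonal (mu nu : BAMeasure 𝒜) : Prop :=
  ∀ ε > (0:ℝ), ∃ A ∈ 𝒜.sets, var mu A < ε ∧ var nu Aᶜ < ε

/-- Strong discontinuity: orthogonal to every strongly continuous element of `ba(𝒜)`. -/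
def StronglyDiscontinuous (mu : BAMeasure 𝒜) : Prop :=
  ∀ nu : BAMeasure 𝒜, StronglyContinuous nu → Orthogonal mu nu

/-- Countable additivity of `λ` on the algebra `𝒜`. -/
def CountablyAdditive (lam : BAMeasure 𝒜) : Prop :=
  ∀ A : ℕ → Set Ω, (∀ n, A n ∈ 𝒜.sets) → Pairwise (Function.onFun Disjoint A) →
    (⋃ n, A n) ∈ 𝒜.sets → HasSum (fun n => lam.toFun (A n)) (lam.toFun (⋃ n, A n))

/-- `𝒜` is a σ-algebra. -/
def IsSigmaAlg (𝒜 : SetAlg Ω) : Prop :=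
  ∀ A : ℕ → Set Ω, (∀ n, A n ∈ 𝒜.sets) → (⋃ n, A n) ∈ 𝒜.sets

/-- Linearity of a functional on `L⁰(λ)`. -/
def LinearOnL0 (lam : BAMeasure 𝒜) (φ : (Ω → ℝ) → ℝ) : Prop :=
  (∀ f ∈ L0 lam, ∀ g ∈ L0 lam, φ (f + g) = φ f + φ g) ∧
  (∀ a : ℝ, ∀ f ∈ L0 lam, φ (a • f) = a * φ f)

/-- Continuity of a functional on `L⁰(λ)` with respect to the metric `d`. -/
def ContinuousOnL0 (lam : BAMeasure 𝒜) (φ : (Ω → ℝ) → ℝ) : Prop :=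
  ∀ f ∈ L0 lam, ∀ ε > (0:ℝ), ∃ δ > (0:ℝ), ∀ g ∈ L0 lam, dL0 lam g f < δ → |φ g - φ f| < ε


/-- `L⁰(λ)` is a locally convex topological vector space: scalar multiplication and addition
are continuous for the metric `d`, and there is a base of convex neighborhoods of the
origin. -/
def IsLCTVS (lam : BAMeasure 𝒜) : Prop :=
  (∀ f ∈ L0 lam, ∀ a : ℝ, ∀ ε > (0:ℝ), ∃ δ > (0:ℝ), ∀ g ∈ L0 lam, ∀ b : ℝ,
      dL0 lam g f < δ → |b - a| < δ → dL0 lam (b • g) (a • f) < ε) ∧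
  (∀ f ∈ L0 lam, ∀ g ∈ L0 lam, ∀ ε > (0:ℝ), ∃ δ > (0:ℝ),
      ∀ f' ∈ L0 lam, ∀ g' ∈ L0 lam,
      dL0 lam f' f < δ → dL0 lam g' g < δ → dL0 lam (f' + g') (f + g) < ε) ∧
  (∀ ε > (0:ℝ), ∃ C : Set (Ω → ℝ), C ⊆ L0 lam ∧ Convex ℝ C ∧
      (∃ δ > (0:ℝ), {f ∈ L0 lam | dL0 lam f 0 < δ} ⊆ C) ∧
      C ⊆ {f ∈ L0 lam | dL0 lam f 0 < ε})

/-!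
All three conditions are equivalent to the following one: for every `ε > 0` there is `δ > 0` such
that every finite union of sets of variation less than `δ` has variation less than `ε`.

A convex combination of functions, each bounded by `c` off a small set, is bounded by `c` off a
finite union of small sets. Conversely, the average of the functions `n·1_{A_i}`, `i = 1, …, n`, is
at least `1` on the whole of `⋃ A_i`. This links the condition to convexity in `L⁰(λ)`.

If `ν` is strongly continuous, the pieces of a fine partition for `ν` that are small for `λ` have a
small union, while the remaining ones carry little of `ν`; so the condition makes `λ` strongly
discontinuous. Conversely, the supremum of `|λ|` over the finite unions of sets of variation less
than `δ` inside `A` decreases, as `δ → 0`, to a strongly continuous function of `A` below `|λ|`. If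
`λ` is strongly discontinuous, it is orthogonal to this function, which therefore vanishes.
-/

theorem SetAlg.isSetAlgebra (𝒜 : SetAlg Ω) : MeasureTheory.IsSetAlgebra 𝒜.sets :=
  ⟨𝒜.empty_mem, 𝒜.compl_mem, 𝒜.union_mem⟩

theorem SetAlg.supClosed_sets (𝒜 : SetAlg Ω) : SupClosed 𝒜.sets :=
  fun _ hA _ hB => 𝒜.union_mem hA hB

/-- An ideal of the algebra `𝒜`: a subfamily containing `∅`, closed under finite unions and under
intersection with members of `𝒜`. -/
structure IsIdeal (𝒜 : SetAlg Ω) (I : Set (Set Ω)) : Prop where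
  subset : I ⊆ 𝒜.sets
  empty_mem : ∅ ∈ I
  supClosed : SupClosed I
  inter_mem : ∀ ⦃B C⦄, B ∈ I → C ∈ 𝒜.sets → B ∩ C ∈ I

theorem SetAlg.isIdeal_sets (𝒜 : SetAlg Ω) : IsIdeal 𝒜 𝒜.sets where
  subset := Subset.rfl
  empty_mem := 𝒜.empty_mem
  supClosed := 𝒜.supClosed_sets
  inter_mem _ _ := 𝒜.isSetAlgebra.inter_mem

/-! ### Suprema over ideals and the total variation -/

/-- The supremum of `λ` over the members of `I` contained in `A`. For `I = 𝒜` this is `λ⁺(A)`. -/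
noncomputable def supOn (lam : BAMeasure 𝒜) (I : Set (Set Ω)) (A : Set Ω) : ℝ :=
  sSup {x | ∃ B ∈ I, B ⊆ A ∧ x = lam.toFun B}

section SupOn

variable {lam : BAMeasure 𝒜} {I : Set (Set Ω)} {A B : Set Ω}

theorem le_supOn (hI : I ⊆ 𝒜.sets) (hB : B ∈ I) (hBA : B ⊆ A) : lam.toFun B ≤ supOn lam I A := by
  obtain ⟨M, hM⟩ := lam.bounded
  refine le_csSup ⟨M, ?_⟩ ⟨B, hB, hBA, rfl⟩
  rintro _ ⟨C, hC, -, rfl⟩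
  exact (le_abs_self _).trans (hM C (hI hC))

theorem supOn_le {r : ℝ} (hI : ∅ ∈ I) (h : ∀ C ∈ I, C ⊆ A → lam.toFun C ≤ r) :
    supOn lam I A ≤ r := by
  refine csSup_le ⟨_, ∅, hI, empty_subset A, rfl⟩ ?_
  rintro _ ⟨C, hC, hCA, rfl⟩
  exact h C hC hCA

theorem exists_lt_of_lt_supOn {r : ℝ} (hI : ∅ ∈ I) (h : r < supOn lam I A) :
    ∃ B ∈ I, B ⊆ A ∧ r < lam.toFun B := by
  by_contra! hle
  exact (supOn_le hI hle).not_gt h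

theorem supOn_nonneg (hI : IsIdeal 𝒜 I) : 0 ≤ supOn lam I A :=
  lam.map_empty.ge.trans (le_supOn hI.subset hI.empty_mem (empty_subset A))

theorem supOn_mono {J : Set (Set Ω)} (hI : ∅ ∈ I) (hJ : J ⊆ 𝒜.sets) (hIJ : I ⊆ J) (hAB : A ⊆ B) :
    supOn lam I A ≤ supOn lam J B :=
  supOn_le hI fun _ hC hCA => le_supOn hJ (hIJ hC) (hCA.trans hAB)

theorem supOn_union (hI : IsIdeal 𝒜 I) (hA : A ∈ 𝒜.sets) (hB : B ∈ 𝒜.sets) (hAB : Disjoint A B) :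
    supOn lam I (A ∪ B) = supOn lam I A + supOn lam I B := by
  apply le_antisymm
  · refine supOn_le hI.empty_mem fun C hC hCAB => ?_
    have hCA := hI.inter_mem hC hA
    have hCB := hI.inter_mem hC hB
    calc lam.toFun C = lam.toFun (C ∩ A ∪ C ∩ B) := by
          rw [← inter_union_distrib_left, inter_eq_left.2 hCAB]
      _ = lam.toFun (C ∩ A) + lam.toFun (C ∩ B) :=
          lam.additive (hI.subset hCA) (hI.subset hCB)
            (hAB.mono inter_subset_right inter_subset_right)
      _ ≤ supOn lam I A + supOn lam I B :=
          add_le_add (le_supOn hI.subset hCA inter_subset_right)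
            (le_supOn hI.subset hCB inter_subset_right)
  · rw [← le_sub_iff_add_le]
    refine supOn_le hI.empty_mem fun C hC hCA => ?_
    rw [le_sub_comm]
    refine supOn_le hI.empty_mem fun D hD hDB => ?_
    have hCD : lam.toFun (C ∪ D) = lam.toFun C + lam.toFun D :=
      lam.additive (hI.subset hC) (hI.subset hD) (hAB.mono hCA hDB)
    have hle : lam.toFun (C ∪ D) ≤ supOn lam I (A ∪ B) :=
      le_supOn hI.subset (hI.supClosed hC hD) (union_subset_union hCA hDB)
    linarith

end SupOn

section Variation

variable {A B : Set Ω}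

instance : Neg (BAMeasure 𝒜) where
  neg lam :=
    { toFun := fun A => -lam.toFun A
      map_empty := by rw [lam.map_empty, neg_zero]
      additive := fun A B hA hB hAB => by rw [lam.additive hA hB hAB, neg_add]
      bounded := by simpa only [abs_neg] using lam.bounded }

theorem var_eq_supOn_add_supOn_neg (lam : BAMeasure 𝒜) (A : Set Ω) :
    var lam A = supOn lam 𝒜.sets A + supOn (-lam) 𝒜.sets A := rfl

theorem var_nonneg (lam : BAMeasure 𝒜) (A : Set Ω) : 0 ≤ var lam A :=
  add_nonneg (supOn_nonneg 𝒜.isIdeal_sets) (supOn_nonneg (lam := -lam) 𝒜.isIdeal_sets)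

theorem var_mono (lam : BAMeasure 𝒜) (hAB : A ⊆ B) : var lam A ≤ var lam B :=
  add_le_add (supOn_mono 𝒜.empty_mem Subset.rfl Subset.rfl hAB)
    (supOn_mono (lam := -lam) 𝒜.empty_mem Subset.rfl Subset.rfl hAB)

theorem var_union (lam : BAMeasure 𝒜) (hA : A ∈ 𝒜.sets) (hB : B ∈ 𝒜.sets) (hAB : Disjoint A B) :
    var lam (A ∪ B) = var lam A + var lam B := by
  simp only [var_eq_supOn_add_supOn_neg, supOn_union 𝒜.isIdeal_sets hA hB hAB]
  ring

theorem var_union_le (lam : BAMeasure 𝒜) (hA : A ∈ 𝒜.sets) (hB : B ∈ 𝒜.sets) :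
    var lam (A ∪ B) ≤ var lam A + var lam B := by
  rw [← union_sdiff_self, var_union lam hA (𝒜.isSetAlgebra.sdiff_mem hB hA) disjoint_sdiff_right]
  gcongr
  exact var_mono lam sdiff_subset

theorem var_empty (lam : BAMeasure 𝒜) : var lam ∅ = 0 := by
  simpa using var_union lam 𝒜.empty_mem 𝒜.empty_mem (disjoint_empty _)

/-- The total variation `|λ|`, as an element of `ba(𝒜)`. -/
noncomputable def variation (lam : BAMeasure 𝒜) : BAMeasure 𝒜 where
  toFun := var lam
  map_empty := var_empty lam
  additive _ _ := var_union lam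
  bounded := ⟨var lam univ, fun A _ =>
    (abs_of_nonneg (var_nonneg lam A)).trans_le (var_mono lam (subset_univ A))⟩

theorem var_biUnion (lam : BAMeasure 𝒜) {ι : Type*} (s : Finset ι) {A : ι → Set Ω}
    (hA : ∀ i, A i ∈ 𝒜.sets) (hdisj : Pairwise (Function.onFun Disjoint A)) :
    var lam (⋃ i ∈ s, A i) = ∑ i ∈ s, var lam (A i) :=
  MeasureTheory.addContent_biUnion
    (m := 𝒜.isSetAlgebra.isSetRing.addContent_of_union (var lam) (var_empty lam) (var_union lam))
    (fun i _ => hA i) (hdisj.set_pairwise _) (𝒜.isSetAlgebra.biUnion_mem s fun i _ => hA i)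

theorem var_eq_toFun_of_nonneg {nu : BAMeasure 𝒜} (h : ∀ A ∈ 𝒜.sets, 0 ≤ nu.toFun A)
    (hA : A ∈ 𝒜.sets) : var nu A = nu.toFun A := by
  have hpos : supOn nu 𝒜.sets A = nu.toFun A := by
    refine le_antisymm (supOn_le 𝒜.empty_mem fun B hB hBA => ?_) (le_supOn Subset.rfl hA Subset.rfl)
    have hdiff := 𝒜.isSetAlgebra.sdiff_mem hA hB
    have hadd := nu.additive hB hdiff disjoint_sdiff_right
    rw [union_sdiff_cancel hBA] at hadd
    linarith [h _ hdiff]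
  have hneg : supOn (-nu) 𝒜.sets A = 0 :=
    le_antisymm (supOn_le 𝒜.empty_mem fun B hB _ => neg_nonpos.2 (h B hB))
      (supOn_nonneg 𝒜.isIdeal_sets)
  rw [var_eq_supOn_add_supOn_neg, hpos, hneg, add_zero]

theorem outer_nonneg (lam : BAMeasure 𝒜) (B : Set Ω) : 0 ≤ outer lam B :=
  Real.sInf_nonneg (by rintro _ ⟨A, -, -, rfl⟩; exact var_nonneg lam A)

theorem outer_le_var (lam : BAMeasure 𝒜) (hA : A ∈ 𝒜.sets) (hBA : B ⊆ A) :
    outer lam B ≤ var lam A :=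
  csInf_le ⟨0, by rintro _ ⟨C, -, -, rfl⟩; exact var_nonneg lam C⟩ ⟨A, hA, hBA, rfl⟩

theorem outer_lt_iff {lam : BAMeasure 𝒜} {ε : ℝ} :
    outer lam B < ε ↔ ∃ A ∈ 𝒜.sets, B ⊆ A ∧ var lam A < ε := by
  constructor
  · intro h
    obtain ⟨_, ⟨A, hA, hBA, rfl⟩, hlt⟩ := exists_lt_of_csInf_lt
      (s := {x | ∃ A ∈ 𝒜.sets, B ⊆ A ∧ x = var lam A})
      ⟨_, univ, 𝒜.isSetAlgebra.univ_mem, subset_univ B, rfl⟩ h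
    exact ⟨A, hA, hBA, hlt⟩
  · rintro ⟨A, hA, hBA, hlt⟩
    exact (outer_le_var lam hA hBA).trans_lt hlt

end Variation

/-! ### The metric of `L⁰(λ)` -/

section Metric

variable {lam : BAMeasure 𝒜} {f g f₁ g₁ f₂ g₂ : Ω → ℝ}

theorem dL0_nonneg (lam : BAMeasure 𝒜) (f g : Ω → ℝ) : 0 ≤ dL0 lam f g :=
  Real.sInf_nonneg (by rintro _ ⟨c, hc, rfl⟩; exact add_nonneg hc.le (outer_nonneg lam _))

theorem dL0_le {c : ℝ} (hc : 0 ≤ c) {A : Set Ω} (hA : A ∈ 𝒜.sets)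
    (hfg : ∀ ω ∉ A, |f ω - g ω| ≤ c) : dL0 lam f g ≤ c + var lam A := by
  refine le_of_forall_pos_le_add fun ε hε => ?_
  have hsub : {ω | c + ε ≤ |f ω - g ω|} ⊆ A := fun ω hω => by
    by_contra hωA
    linarith [hfg ω hωA, show c + ε ≤ |f ω - g ω| from hω]
  calc dL0 lam f g ≤ c + ε + outer lam {ω | c + ε ≤ |f ω - g ω|} := by
        refine csInf_le ⟨0, ?_⟩ ⟨c + ε, by positivity, rfl⟩
        rintro _ ⟨c', hc', rfl⟩
        exact add_nonneg hc'.le (outer_nonneg lam _)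
    _ ≤ c + var lam A + ε := by linarith [outer_le_var lam hA hsub]

theorem dL0_lt_iff {ε : ℝ} : dL0 lam f g < ε ↔
    ∃ c ≥ 0, ∃ A ∈ 𝒜.sets, (∀ ω ∉ A, |f ω - g ω| ≤ c) ∧ c + var lam A < ε := by
  constructor
  · intro hlt
    obtain ⟨_, ⟨c, hc, rfl⟩, hcε⟩ := exists_lt_of_csInf_lt
      (s := {x | ∃ c > (0 : ℝ), x = c + outer lam {ω | c ≤ |f ω - g ω|}}) ⟨_, 1, one_pos, rfl⟩ hlt
    obtain ⟨A, hA, hsub, hvar⟩ := outer_lt_iff.1 (lt_sub_iff_add_lt'.2 hcε)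
    exact ⟨c, hc.le, A, hA, fun ω hω => (not_le.1 fun hle => hω (hsub hle)).le,
      lt_sub_iff_add_lt'.1 hvar⟩
  · rintro ⟨c, hc, A, hA, hfg, hlt⟩
    exact (dL0_le hc hA hfg).trans_lt hlt

theorem dL0_le_add (hle : ∀ ω, |f ω - g ω| ≤ |f₁ ω - g₁ ω| + |f₂ ω - g₂ ω|) :
    dL0 lam f g ≤ dL0 lam f₁ g₁ + dL0 lam f₂ g₂ := by
  refine le_of_forall_pos_le_add fun ε hε => ?_
  obtain ⟨c₁, hc₁, A₁, hA₁, h₁, hlt₁⟩ := dL0_lt_iff.1 (lt_add_of_pos_right (dL0 lam f₁ g₁)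
    (half_pos hε))
  obtain ⟨c₂, hc₂, A₂, hA₂, h₂, hlt₂⟩ := dL0_lt_iff.1 (lt_add_of_pos_right (dL0 lam f₂ g₂)
    (half_pos hε))
  have hd : dL0 lam f g ≤ c₁ + c₂ + var lam (A₁ ∪ A₂) := by
    refine dL0_le (add_nonneg hc₁ hc₂) (𝒜.union_mem hA₁ hA₂) fun ω hω => ?_
    rw [mem_union, not_or] at hω
    exact (hle ω).trans (add_le_add (h₁ ω hω.1) (h₂ ω hω.2))
  linarith [var_union_le lam hA₁ hA₂]

theorem dL0_triangle (lam : BAMeasure 𝒜) (f g h : Ω → ℝ) :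
    dL0 lam f h ≤ dL0 lam f g + dL0 lam g h :=
  dL0_le_add fun _ => abs_sub_le _ _ _

theorem dL0_add_add_le (lam : BAMeasure 𝒜) (f₁ f₂ g₁ g₂ : Ω → ℝ) :
    dL0 lam (f₁ + f₂) (g₁ + g₂) ≤ dL0 lam f₁ g₁ + dL0 lam f₂ g₂ :=
  dL0_le_add fun ω => by
    simpa only [Pi.add_apply, add_sub_add_comm] using abs_add_le (f₁ ω - g₁ ω) (f₂ ω - g₂ ω)

theorem dL0_smul_smul_le (lam : BAMeasure 𝒜) (a : ℝ) (f g : Ω → ℝ) :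
    dL0 lam (a • f) (a • g) ≤ max 1 |a| * dL0 lam f g := by
  have hpos : 0 < max 1 |a| := one_pos.trans_le (le_max_left _ _)
  rw [mul_comm, ← div_le_iff₀ hpos]
  refine le_of_forall_gt fun ε hε => ?_
  obtain ⟨c, hc, A, hA, hfg, hlt⟩ := dL0_lt_iff.1 hε
  have hd : dL0 lam (a • f) (a • g) ≤ max 1 |a| * c + var lam A := by
    refine dL0_le (by positivity) hA fun ω hω => ?_
    calc |(a • f) ω - (a • g) ω| = |a| * |f ω - g ω| := by
          rw [Pi.smul_apply, Pi.smul_apply, ← smul_sub, smul_eq_mul, abs_mul]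
      _ ≤ max 1 |a| * c := by gcongr; exacts [le_max_right _ _, hfg ω hω]
  rw [div_lt_iff₀' hpos]
  calc dL0 lam (a • f) (a • g) ≤ max 1 |a| * c + max 1 |a| * var lam A :=
        hd.trans (by gcongr; exact le_mul_of_one_le_left (var_nonneg lam A) (le_max_left _ _))
    _ < max 1 |a| * ε := by rw [← mul_add]; gcongr

theorem lConv_iff_tendsto_dL0 {s : ℕ → Ω → ℝ} :
    LConv lam s f ↔ Tendsto (fun n => dL0 lam (s n) f) atTop (𝓝 0) := by
  constructor
  · intro hs
    refine tendsto_order.2 ⟨fun a ha => .of_forall fun n => ha.trans_le (dL0_nonneg _ _ _), ?_⟩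
    intro ε hε
    filter_upwards [(hs (ε / 2) (half_pos hε)).eventually_lt_const (half_pos hε)] with n hn
    obtain ⟨A, hA, hsub, hvar⟩ := outer_lt_iff.1 hn
    have hd := dL0_le (lam := lam) (half_pos hε).le hA fun ω hω => not_lt.1 fun hlt => hω (hsub hlt)
    linarith
  · intro hs c hc
    refine tendsto_order.2 ⟨fun a ha => .of_forall fun n => ha.trans_le (outer_nonneg _ _), ?_⟩
    intro ε hε
    filter_upwards [hs.eventually_lt_const (lt_min hc hε)] with n hn
    obtain ⟨c', hc', A, hA, hle, hlt⟩ := dL0_lt_iff.1 hn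
    obtain ⟨hltc, hltε⟩ := lt_min_iff.1 hlt
    refine outer_lt_iff.2 ⟨A, hA, fun ω hω => ?_, by linarith⟩
    by_contra hωA
    linarith [hle ω hωA, show c < |s n ω - f ω| from hω, var_nonneg lam A]

end Metric

/-! ### The vector space `L⁰(λ)` -/

section Space

variable {lam : BAMeasure 𝒜} {f g : Ω → ℝ}

theorem IsSimple.map₂ (hf : IsSimple 𝒜 f) (hg : IsSimple 𝒜 g) (φ : ℝ → ℝ → ℝ) :
    IsSimple 𝒜 fun ω => φ (f ω) (g ω) := by
  classical
  refine ⟨(hf.1.image2 φ hg.1).subset ?_, fun r => ?_⟩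
  · rintro _ ⟨ω, rfl⟩
    exact mem_image2_of_mem (mem_range_self ω) (mem_range_self ω)
  · have hpre : (fun ω => φ (f ω) (g ω)) ⁻¹' {r} =
        ⋃ p ∈ (hf.1.toFinset ×ˢ hg.1.toFinset).filter fun p => φ p.1 p.2 = r,
          f ⁻¹' {p.1} ∩ g ⁻¹' {p.2} := by
      ext ω
      simp only [mem_preimage, mem_singleton_iff, Finset.mem_filter, Finset.mem_product,
        Finite.mem_toFinset, mem_iUnion, mem_inter_iff, exists_prop, Prod.exists]
      constructor
      · exact fun h => ⟨f ω, g ω, ⟨⟨mem_range_self ω, mem_range_self ω⟩, h⟩, rfl, rfl⟩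
      · rintro ⟨_, _, ⟨-, h⟩, rfl, rfl⟩
        exact h
    rw [hpre]
    exact 𝒜.isSetAlgebra.biUnion_mem _ fun p _ =>
      𝒜.isSetAlgebra.inter_mem (hf.2 p.1) (hg.2 p.2)

theorem IsSimple.add (hf : IsSimple 𝒜 f) (hg : IsSimple 𝒜 g) : IsSimple 𝒜 (f + g) :=
  hf.map₂ hg (· + ·)

theorem IsSimple.const_smul (hf : IsSimple 𝒜 f) (a : ℝ) : IsSimple 𝒜 (a • f) :=
  hf.map₂ hf fun x _ => a • x

theorem isSimple_indicator_const {A : Set Ω} (hA : A ∈ 𝒜.sets) (r : ℝ) :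
    IsSimple 𝒜 (A.indicator fun _ => r) := by
  classical
  refine ⟨(toFinite {0, r}).subset ?_, fun s => ?_⟩
  · rintro _ ⟨ω, rfl⟩
    by_cases hω : ω ∈ A <;> simp [hω]
  · rw [indicator_const_preimage_eq_union]
    split_ifs <;> simp [𝒜.isSetAlgebra.univ_mem, 𝒜.empty_mem, hA, 𝒜.compl_mem hA]

theorem IsSimple.exists_abs_le (hf : IsSimple 𝒜 f) : ∃ R ≥ 0, ∀ ω, |f ω| ≤ R := by
  obtain ⟨R, hR⟩ := (hf.1.image abs).bddAbove
  exact ⟨max 0 R, le_max_left _ _, fun ω =>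
    (hR (mem_image_of_mem _ (mem_range_self ω))).trans (le_max_right _ _)⟩

theorem IsSimple.mem_L0 (hf : IsSimple 𝒜 f) : f ∈ L0 lam := by
  have hself : dL0 lam f f = 0 := le_antisymm
    (by simpa [var_empty] using
      dL0_le (lam := lam) (f := f) (g := f) le_rfl 𝒜.empty_mem (by simp)) (dL0_nonneg lam f f)
  exact ⟨fun _ => f, fun _ => hf, lConv_iff_tendsto_dL0.2 (by simp [hself])⟩

theorem exists_isSimple_dL0_lt (hf : f ∈ L0 lam) {ε : ℝ} (hε : 0 < ε) :
    ∃ s, IsSimple 𝒜 s ∧ dL0 lam f s < ε := by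
  obtain ⟨s, hs, hlim⟩ := hf
  obtain ⟨n, hn⟩ := ((lConv_iff_tendsto_dL0.1 hlim).eventually_lt_const hε).exists
  exact ⟨s n, hs n, by simpa only [dL0, abs_sub_comm] using hn⟩

theorem add_mem_L0 (hf : f ∈ L0 lam) (hg : g ∈ L0 lam) : f + g ∈ L0 lam := by
  obtain ⟨s, hs, hsf⟩ := hf
  obtain ⟨t, ht, htg⟩ := hg
  rw [lConv_iff_tendsto_dL0] at hsf htg
  refine ⟨fun n => s n + t n, fun n => (hs n).add (ht n), lConv_iff_tendsto_dL0.2 ?_⟩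
  exact squeeze_zero (fun n => dL0_nonneg _ _ _) (fun n => dL0_add_add_le lam _ _ _ _)
    (by simpa only [add_zero] using hsf.add htg)

theorem smul_mem_L0 (hf : f ∈ L0 lam) (a : ℝ) : a • f ∈ L0 lam := by
  obtain ⟨s, hs, hsf⟩ := hf
  rw [lConv_iff_tendsto_dL0] at hsf
  refine ⟨fun n => a • s n, fun n => (hs n).const_smul a, lConv_iff_tendsto_dL0.2 ?_⟩
  exact squeeze_zero (fun n => dL0_nonneg _ _ _) (fun n => dL0_smul_smul_le lam a _ _)
    (by simpa only [mul_zero] using hsf.const_mul (max 1 |a|))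

theorem convex_L0 (lam : BAMeasure 𝒜) : Convex ℝ (L0 lam) :=
  fun _ hf _ hg a b _ _ _ => add_mem_L0 (smul_mem_L0 hf a) (smul_mem_L0 hg b)

theorem tendsto_dL0_smul_zero (hf : f ∈ L0 lam) :
    Tendsto (fun t : ℝ => dL0 lam (t • f) 0) (𝓝 0) (𝓝 0) := by
  refine tendsto_order.2 ⟨fun a ha => .of_forall fun t => ha.trans_le (dL0_nonneg _ _ _), ?_⟩
  intro ε hε
  obtain ⟨s, hs, hfs⟩ := exists_isSimple_dL0_lt hf (half_pos hε)
  obtain ⟨R, hR, hsR⟩ := hs.exists_abs_le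
  have hlim : Tendsto (fun t : ℝ => |t| * R) (𝓝 0) (𝓝 0) :=
    Continuous.tendsto' (by fun_prop) _ _ (by simp)
  filter_upwards [hlim.eventually_lt_const (half_pos hε),
    (continuous_abs.tendsto' (0 : ℝ) 0 abs_zero).eventually_lt_const one_pos] with t htR ht1
  have hts : dL0 lam (t • s) 0 ≤ |t| * R := by
    have hd : dL0 lam (t • s) 0 ≤ |t| * R + var lam ∅ :=
      dL0_le (by positivity) 𝒜.empty_mem fun ω _ => by
        simpa [abs_mul] using mul_le_mul_of_nonneg_left (hsR ω) (abs_nonneg t)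
    rwa [var_empty, add_zero] at hd
  have htf : dL0 lam (t • f) (t • s) ≤ dL0 lam f s := by
    simpa only [max_eq_left ht1.le, one_mul] using dL0_smul_smul_le lam t f s
  linarith [dL0_triangle lam (t • f) (t • s) 0]

theorem exists_forall_dL0_smul_lt (hf : f ∈ L0 lam) (a : ℝ) {ε : ℝ} (hε : 0 < ε) :
    ∃ δ > 0, ∀ (g : Ω → ℝ) (b : ℝ), dL0 lam g f < δ → |b - a| < δ →
      dL0 lam (b • g) (a • f) < ε := by
  obtain ⟨δ, hδ, hsmul⟩ := Metric.eventually_nhds_iff.1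
    ((tendsto_dL0_smul_zero hf).eventually_lt_const (half_pos hε))
  have hpos : 0 < |a| + 1 := by positivity
  refine ⟨min (min 1 δ) (ε / 2 / (|a| + 1)), by positivity, fun g b hg hb => ?_⟩
  obtain ⟨⟨hb1, hbδ⟩, -⟩ := (lt_min_iff.1 hb).imp_left lt_min_iff.1
  have hmax : max 1 |b| ≤ |a| + 1 :=
    max_le (by linarith [abs_nonneg a]) (by linarith [abs_sub_abs_le_abs_sub b a])
  have hbg : dL0 lam (b • g) (b • f) < ε / 2 := calc
    dL0 lam (b • g) (b • f) ≤ max 1 |b| * dL0 lam g f := dL0_smul_smul_le lam b g f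
    _ ≤ (|a| + 1) * dL0 lam g f := by gcongr; exact dL0_nonneg lam g f
    _ < ε / 2 := (lt_div_iff₀' hpos).1 (hg.trans_le (min_le_right _ _))
  have hbf : dL0 lam (b • f) (a • f) < ε / 2 := by
    have heq : dL0 lam (b • f) (a • f) = dL0 lam ((b - a) • f) 0 := by
      simp [dL0, sub_mul]
    rw [heq]
    exact hsmul (by simpa [Real.dist_eq] using hbδ)
  linarith [dL0_triangle lam (b • g) (b • f) (a • f)]

end Space

/-! ### Finite unions of small sets -/

/-- The members of `𝒜` of variation less than `δ`. -/
def smallSets (lam : BAMeasure 𝒜) (δ : ℝ) : Set (Set Ω) := {A | A ∈ 𝒜.sets ∧ var lam A < δ}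

/-- The finite unions of members of `𝒜` of variation less than `δ`. Since `supClosure` only takes
unions of nonempty families, this is empty when `δ ≤ 0`. -/
def smallUnions (lam : BAMeasure 𝒜) (δ : ℝ) : Set (Set Ω) := supClosure (smallSets lam δ)

/-- Finite unions of sets of small variation have small variation. This intrinsic property of `λ`
mediates between the three conditions of the theorem. -/
def HasSmallFiniteUnions (lam : BAMeasure 𝒜) : Prop :=
  ∀ ε > (0 : ℝ), ∃ δ > (0 : ℝ), ∀ B ∈ smallUnions lam δ, var lam B < ε

section SmallUnions

variable {lam : BAMeasure 𝒜} {δ : ℝ} {B : Set Ω}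

theorem smallSets_subset_smallUnions : smallSets lam δ ⊆ smallUnions lam δ := subset_supClosure

theorem supClosed_smallUnions (lam : BAMeasure 𝒜) (δ : ℝ) : SupClosed (smallUnions lam δ) :=
  supClosed_supClosure

theorem smallUnions_mono {mu : BAMeasure 𝒜} {η : ℝ}
    (hle : ∀ A ∈ 𝒜.sets, var mu A ≤ var lam A) (hδη : δ ≤ η) :
    smallUnions lam δ ⊆ smallUnions mu η :=
  supClosure_mono fun A hA => ⟨hA.1, ((hle A hA.1).trans_lt hA.2).trans_le hδη⟩

theorem mem_smallUnions_iff : B ∈ smallUnions lam δ ↔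
    ∃ F : Finset (Set Ω), F.Nonempty ∧ ↑F ⊆ smallSets lam δ ∧ ⋃₀ ↑F = B := by
  constructor
  · rintro ⟨F, hF, hsub, rfl⟩
    exact ⟨F, hF, hsub, by rw [Finset.sup'_eq_sup, Finset.sup_id_set_eq_sUnion]⟩
  · rintro ⟨F, hF, hsub, rfl⟩
    exact ⟨F, hF, hsub, by rw [Finset.sup'_eq_sup, Finset.sup_id_set_eq_sUnion]⟩

theorem isIdeal_smallUnions (lam : BAMeasure 𝒜) (hδ : 0 < δ) : IsIdeal 𝒜 (smallUnions lam δ) where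
  subset := supClosure_min (fun _ hA => hA.1) 𝒜.supClosed_sets
  empty_mem := smallSets_subset_smallUnions ⟨𝒜.empty_mem, (var_empty lam).trans_lt hδ⟩
  supClosed := supClosed_smallUnions lam δ
  inter_mem B C hB hC := by
    refine supClosure_min (t := {D | D ∩ C ∈ smallUnions lam δ}) ?_ ?_ hB
    · exact fun A hA => smallSets_subset_smallUnions ⟨𝒜.isSetAlgebra.inter_mem hA.1 hC,
        (var_mono lam inter_subset_left).trans_lt hA.2⟩
    · intro D hD E hE
      change (D ∪ E) ∩ C ∈ smallUnions lam δ
      rw [union_inter_distrib_right]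
      exact supClosed_smallUnions lam δ hD hE

theorem biUnion_mem_smallUnions (hδ : 0 < δ) {ι : Type*} (s : Finset ι) {A : ι → Set Ω}
    (hA : ∀ i ∈ s, A i ∈ smallSets lam δ) : ⋃ i ∈ s, A i ∈ smallUnions lam δ := by
  rw [← Finset.sup_set_eq_biUnion]
  exact Finset.sup_induction (isIdeal_smallUnions lam hδ).empty_mem
    (fun _ hB _ hC => supClosed_smallUnions lam δ hB hC)
    fun i hi => smallSets_subset_smallUnions (hA i hi)

theorem stronglyContinuous_of_univ_mem_smallUnions (h : ∀ ε > 0, univ ∈ smallUnions lam ε) :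
    StronglyContinuous lam := by
  intro ε hε
  obtain ⟨F, -, hF, hcover⟩ := mem_smallUnions_iff.1 (h ε hε)
  let A : Fin F.card → Set Ω := fun i => F.equivFin.symm i
  have hA (i) : A i ∈ smallSets lam ε := hF (F.equivFin.symm i).2
  have hdisj_mem (i) : disjointed A i ∈ 𝒜.sets :=
    𝒜.isSetAlgebra.isSetRing.disjointed_mem (fun j => (hA j).1) i
  refine ⟨F.card, disjointed A, hdisj_mem, disjoint_disjointed A, ?_,
    fun i => (var_mono lam (disjointed_subset A i)).trans_lt (hA i).2⟩
  rw [iUnion_disjointed, ← hcover, sUnion_eq_iUnion]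
  exact F.equivFin.symm.iSup_comp

end SmallUnions

/-! ### Strong discontinuity -/

section Discontinuity

variable {lam : BAMeasure 𝒜} {δ : ℝ} {A : Set Ω}

theorem HasSmallFiniteUnions.stronglyDiscontinuous (h : HasSmallFiniteUnions lam) :
    StronglyDiscontinuous lam := by
  intro nu hnu ε hε
  obtain ⟨δ, hδ, hsmall⟩ := h ε hε
  have hV := var_nonneg lam univ
  obtain ⟨N, A, hA, hdisj, hcover, hnuA⟩ := hnu (ε / (var lam univ + 1) * δ) (by positivity)
  let S := Finset.univ.filter fun n => var lam (A n) < δ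
  have hS : ⋃ n ∈ S, A n ∈ smallUnions lam δ :=
    biUnion_mem_smallUnions hδ S fun n hn => ⟨hA n, (Finset.mem_filter.1 hn).2⟩
  have hcompl : (⋃ n ∈ S, A n)ᶜ ⊆ ⋃ n ∈ Sᶜ, A n := by
    rw [compl_subset_iff_union, ← Finset.set_biUnion_union, Finset.union_compl]
    simpa using hcover
  have hlarge (n) (hn : n ∈ Sᶜ) : var nu (A n) ≤ ε / (var lam univ + 1) * var lam (A n) := by
    refine (hnuA n).le.trans ?_
    gcongr
    simpa [S] using hn
  refine ⟨_, (isIdeal_smallUnions lam hδ).subset hS, hsmall _ hS, ?_⟩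
  calc var nu (⋃ n ∈ S, A n)ᶜ ≤ var nu (⋃ n ∈ Sᶜ, A n) := var_mono nu hcompl
    _ = ∑ n ∈ Sᶜ, var nu (A n) := var_biUnion nu _ hA hdisj
    _ ≤ ∑ n ∈ Sᶜ, ε / (var lam univ + 1) * var lam (A n) := Finset.sum_le_sum hlarge
    _ = ε / (var lam univ + 1) * var lam (⋃ n ∈ Sᶜ, A n) := by
      rw [var_biUnion lam _ hA hdisj, Finset.mul_sum]
    _ ≤ ε / (var lam univ + 1) * var lam univ := by gcongr; exact var_mono lam (subset_univ _)
    _ < ε := by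
      rw [div_mul_eq_mul_div, div_lt_iff₀ (by positivity)]
      gcongr
      exact lt_add_one _

theorem supOn_variation_smallUnions_le_var (hδ : 0 < δ) :
    supOn (variation lam) (smallUnions lam δ) A ≤ var lam A :=
  supOn_le (isIdeal_smallUnions lam hδ).empty_mem fun _ _ hBA => var_mono lam hBA

theorem tendsto_supOn_variation_smallUnions (lam : BAMeasure 𝒜) (A : Set Ω) :
    Tendsto (fun δ : Ioi (0 : ℝ) => supOn (variation lam) (smallUnions lam δ) A) atBot
      (𝓝 (⨅ δ : Ioi (0 : ℝ), supOn (variation lam) (smallUnions lam δ) A)) := by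
  refine tendsto_atBot_ciInf (fun δ η hδη => ?_) ⟨0, ?_⟩
  · exact supOn_mono (isIdeal_smallUnions lam δ.2).empty_mem (isIdeal_smallUnions lam η.2).subset
      (smallUnions_mono (fun _ _ => le_rfl) hδη) Subset.rfl
  · rintro _ ⟨δ, rfl⟩
    exact supOn_nonneg (isIdeal_smallUnions lam δ.2)

/-- The infimum over `δ > 0` of the suprema of `|λ|` over the finite unions of sets of variation
less than `δ`. It is a strongly continuous element of `ba(𝒜)` dominated by `|λ|`, which vanishes
when finite unions of small sets are small, and it serves to test strong discontinuity. -/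
noncomputable def continuousPart (lam : BAMeasure 𝒜) : BAMeasure 𝒜 where
  toFun A := ⨅ δ : Ioi (0 : ℝ), supOn (variation lam) (smallUnions lam δ) A
  map_empty := by
    refine tendsto_nhds_unique (tendsto_supOn_variation_smallUnions lam ∅) ?_
    refine tendsto_const_nhds.congr fun δ => le_antisymm ?_ ?_
    · exact supOn_nonneg (isIdeal_smallUnions lam δ.2)
    · exact (supOn_variation_smallUnions_le_var δ.2).trans_eq (var_empty lam)
  additive A B hA hB hAB := by
    refine tendsto_nhds_unique (tendsto_supOn_variation_smallUnions lam (A ∪ B)) ?_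
    refine ((tendsto_supOn_variation_smallUnions lam A).add
      (tendsto_supOn_variation_smallUnions lam B)).congr fun δ => ?_
    exact (supOn_union (isIdeal_smallUnions lam δ.2) hA hB hAB).symm
  bounded := by
    refine ⟨var lam univ, fun A _ => ?_⟩
    refine le_of_tendsto (tendsto_supOn_variation_smallUnions lam A).abs (.of_forall fun δ => ?_)
    rw [abs_of_nonneg (supOn_nonneg (isIdeal_smallUnions lam δ.2))]
    exact (supOn_variation_smallUnions_le_var δ.2).trans (var_mono lam (subset_univ A))

theorem var_continuousPart (lam : BAMeasure 𝒜) (hA : A ∈ 𝒜.sets) : var (continuousPart lam) A =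
    ⨅ δ : Ioi (0 : ℝ), supOn (variation lam) (smallUnions lam δ) A :=
  var_eq_toFun_of_nonneg
    (fun _ _ => Real.iInf_nonneg fun δ => supOn_nonneg (isIdeal_smallUnions lam δ.2)) hA

theorem var_continuousPart_le_supOn (hδ : 0 < δ) (hA : A ∈ 𝒜.sets) :
    var (continuousPart lam) A ≤ supOn (variation lam) (smallUnions lam δ) A := by
  rw [var_continuousPart lam hA]
  refine ciInf_le ⟨0, ?_⟩ (⟨δ, hδ⟩ : Ioi (0 : ℝ))
  rintro _ ⟨η, rfl⟩
  exact supOn_nonneg (isIdeal_smallUnions lam η.2)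

theorem var_continuousPart_le_var (lam : BAMeasure 𝒜) (hA : A ∈ 𝒜.sets) :
    var (continuousPart lam) A ≤ var lam A :=
  (var_continuousPart_le_supOn one_pos hA).trans (supOn_variation_smallUnions_le_var one_pos)

theorem stronglyContinuous_continuousPart (lam : BAMeasure 𝒜) :
    StronglyContinuous (continuousPart lam) := by
  refine stronglyContinuous_of_univ_mem_smallUnions fun ε hε => ?_
  have hideal := isIdeal_smallUnions lam hε
  obtain ⟨B, hB, -, hlt⟩ := exists_lt_of_lt_supOn (lam := variation lam) hideal.empty_mem
    (sub_lt_self (supOn (variation lam) (smallUnions lam ε) univ) hε)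
  have hBc : Bᶜ ∈ 𝒜.sets := 𝒜.compl_mem (hideal.subset hB)
  have hsmall : var (continuousPart lam) Bᶜ < ε := by
    have hadd := supOn_union (lam := variation lam) hideal (hideal.subset hB) hBc
      disjoint_compl_right
    rw [union_compl_self] at hadd
    linarith [var_continuousPart_le_supOn (lam := lam) hε hBc,
      le_supOn (lam := variation lam) hideal.subset hB Subset.rfl]
  rw [← union_compl_self B]
  exact supClosed_smallUnions _ _
    (smallUnions_mono (fun _ => var_continuousPart_le_var lam) le_rfl hB)
    (smallSets_subset_smallUnions ⟨hBc, hsmall⟩)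

theorem StronglyDiscontinuous.hasSmallFiniteUnions (h : StronglyDiscontinuous lam) :
    HasSmallFiniteUnions lam := by
  have hzero : var (continuousPart lam) univ ≤ 0 := by
    refine le_of_forall_pos_le_add fun ε hε => ?_
    obtain ⟨A, hA, hlam, hcont⟩ := h _ (stronglyContinuous_continuousPart lam) _ (half_pos hε)
    rw [← union_compl_self A, var_union _ hA (𝒜.compl_mem hA) disjoint_compl_right]
    linarith [var_continuousPart_le_var lam hA]
  intro ε hε
  rw [var_continuousPart lam 𝒜.isSetAlgebra.univ_mem] at hzero
  obtain ⟨⟨δ, hδ⟩, hlt⟩ := exists_lt_of_ciInf_lt (hzero.trans_lt hε)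
  exact ⟨δ, hδ, fun B hB => (le_supOn (lam := variation lam) (isIdeal_smallUnions lam hδ).subset hB
    (subset_univ B)).trans_lt hlt⟩

end Discontinuity

/-! ### Convex sets of functions -/

/-- The functions that are bounded by `c` in absolute value outside some member of `I`. -/
def boundedOff (I : Set (Set Ω)) (c : ℝ) : Set (Ω → ℝ) := {f | ∃ B ∈ I, ∀ ω ∉ B, |f ω| ≤ c}

theorem convex_boundedOff {I : Set (Set Ω)} (hI : SupClosed I) (c : ℝ) :
    Convex ℝ (boundedOff I c) := by
  rintro f ⟨A, hA, hf⟩ g ⟨B, hB, hg⟩ a b ha hb hab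
  refine ⟨A ∪ B, hI hA hB, fun ω hω => ?_⟩
  rw [mem_union, not_or] at hω
  exact abs_le.2 (convex_Icc (-c) c (abs_le.1 (hf ω hω.1)) (abs_le.1 (hg ω hω.2)) ha hb hab)

theorem exists_mem_forall_sUnion_le {C : Set (Ω → ℝ)} (hC : Convex ℝ C) {F : Finset (Set Ω)}
    (hF : F.Nonempty) {r : ℝ} (hr : 0 ≤ r)
    (hmem : ∀ A ∈ F, A.indicator (fun _ => F.card * r) ∈ C) :
    ∃ g ∈ C, ∀ ω ∈ ⋃₀ (F : Set (Set Ω)), r ≤ g ω := by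
  have hcard : (F.card : ℝ) ≠ 0 := by exact_mod_cast hF.card_ne_zero
  let φ (A : Set Ω) : Ω → ℝ := (F.card : ℝ)⁻¹ • A.indicator fun _ => F.card * r
  have hφ (A) (ω) : 0 ≤ φ A ω := by
    have hind : 0 ≤ A.indicator (fun _ => F.card * r) ω :=
      indicator_apply_nonneg fun _ => by positivity
    exact mul_nonneg (by positivity) hind
  refine ⟨∑ A ∈ F, φ A, hC.sum_mem (fun _ _ => by positivity) (by simp [hcard]) hmem, ?_⟩
  rintro ω ⟨A, hA, hωA⟩
  calc r = φ A ω := by simp [φ, hωA, hcard]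
    _ ≤ ∑ B ∈ F, φ B ω := Finset.single_le_sum (f := (φ · ω)) (fun B _ => hφ B ω) hA
    _ = (∑ B ∈ F, φ B) ω := (Finset.sum_apply ω F φ).symm

section Convexity

variable {lam : BAMeasure 𝒜}

theorem HasSmallFiniteUnions.bddL0_convexHull (h : HasSmallFiniteUnions lam) {K : Set (Ω → ℝ)}
    (hK : BddL0 lam K) : BddL0 lam (convexHull ℝ K) := by
  intro ε hε
  obtain ⟨δ, hδ, hsmall⟩ := h ε hε
  obtain ⟨c₀, hc₀⟩ := hK δ hδ
  have hsub : convexHull ℝ K ⊆ boundedOff (smallUnions lam δ) c₀ := by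
    refine convexHull_min (fun f hf => ?_) (convex_boundedOff (supClosed_smallUnions lam δ) c₀)
    obtain ⟨A, hA, hfA, hvar⟩ := outer_lt_iff.1 (hc₀ c₀ le_rfl f hf)
    exact ⟨A, smallSets_subset_smallUnions ⟨hA, hvar⟩, fun ω hω => not_lt.1 fun hlt => hω (hfA hlt)⟩
  refine ⟨c₀, fun c hc f hf => ?_⟩
  obtain ⟨B, hB, hfB⟩ := hsub hf
  refine outer_lt_iff.2 ⟨B, (isIdeal_smallUnions lam hδ).subset hB, fun ω hω => ?_, hsmall B hB⟩
  by_contra hωB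
  exact (hc.trans_lt hω).not_ge (hfB ω hωB)

theorem HasSmallFiniteUnions.exists_convex_nhds (h : HasSmallFiniteUnions lam) {ε : ℝ}
    (hε : 0 < ε) : ∃ C ⊆ L0 lam, Convex ℝ C ∧ (∃ δ > 0, {f ∈ L0 lam | dL0 lam f 0 < δ} ⊆ C) ∧
      C ⊆ {f ∈ L0 lam | dL0 lam f 0 < ε} := by
  obtain ⟨δ, hδ, hsmall⟩ := h (ε / 2) (half_pos hε)
  let U := {f ∈ L0 lam | dL0 lam f 0 < min δ (ε / 2)}
  have hL0 : convexHull ℝ U ⊆ L0 lam := convexHull_min (sep_subset _ _) (convex_L0 lam)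
  have hbdd : convexHull ℝ U ⊆ boundedOff (smallUnions lam δ) (ε / 2) := by
    refine convexHull_min ?_ (convex_boundedOff (supClosed_smallUnions lam δ) _)
    rintro f ⟨-, hf⟩
    obtain ⟨c, hc, A, hA, hfA, hlt⟩ := dL0_lt_iff.1 hf
    obtain ⟨hltδ, hltε⟩ := lt_min_iff.1 hlt
    refine ⟨A, smallSets_subset_smallUnions ⟨hA, by linarith⟩, fun ω hω => ?_⟩
    have hfω := hfA ω hω
    rw [Pi.zero_apply, sub_zero] at hfω
    linarith [var_nonneg lam A]
  refine ⟨convexHull ℝ U, hL0, convex_convexHull ℝ U,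
    ⟨min δ (ε / 2), by positivity, subset_convexHull ℝ U⟩, fun f hf => ⟨hL0 hf, ?_⟩⟩
  obtain ⟨B, hB, hfB⟩ := hbdd hf
  calc dL0 lam f 0 ≤ ε / 2 + var lam B :=
        dL0_le (by positivity) ((isIdeal_smallUnions lam hδ).subset hB) (by simpa using hfB)
    _ < ε := by linarith [hsmall B hB]

theorem HasSmallFiniteUnions.isLCTVS (h : HasSmallFiniteUnions lam) : IsLCTVS lam := by
  refine ⟨fun f hf a ε hε => ?_, fun f _ g _ ε hε => ?_, fun ε hε => h.exists_convex_nhds hε⟩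
  · obtain ⟨δ, hδ, hsmul⟩ := exists_forall_dL0_smul_lt hf a hε
    exact ⟨δ, hδ, fun g _ b => hsmul g b⟩
  · refine ⟨ε / 2, half_pos hε, fun f' _ g' _ hff hgg => ?_⟩
    linarith [dL0_add_add_le lam f' g' f g]

theorem IsLCTVS.hasSmallFiniteUnions (h : IsLCTVS lam) : HasSmallFiniteUnions lam := by
  intro ε hε
  obtain ⟨C, -, hC, ⟨δ, hδ, hball⟩, hsmall⟩ := h.2.2 (min ε 1) (by positivity)
  refine ⟨δ, hδ, fun B hB => ?_⟩
  obtain ⟨F, hF, hFδ, rfl⟩ := mem_smallUnions_iff.1 hB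
  have hmem (A) (hA : A ∈ F) : A.indicator (fun _ => F.card * (1 : ℝ)) ∈ C := by
    obtain ⟨hA𝒜, hvar⟩ := hFδ hA
    refine hball ⟨(isSimple_indicator_const hA𝒜 _).mem_L0, ?_⟩
    refine dL0_lt_iff.2 ⟨0, le_rfl, A, hA𝒜, fun ω hω => ?_, by rwa [zero_add]⟩
    simp [hω]
  obtain ⟨g, hg, hle⟩ := exists_mem_forall_sUnion_le hC hF zero_le_one hmem
  obtain ⟨c, hc, A, -, hgA, hlt⟩ := dL0_lt_iff.1 (hsmall hg).2
  obtain ⟨hltε, hlt1⟩ := lt_min_iff.1 hlt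
  have hsub : ⋃₀ ↑F ⊆ A := fun ω hω => by
    by_contra hωA
    have hgω := hgA ω hωA
    rw [Pi.zero_apply, sub_zero] at hgω
    linarith [hle ω hω, le_abs_self (g ω), var_nonneg lam A]
  linarith [var_mono lam hsub]

theorem bddL0_indicator_smallSets (lam : BAMeasure 𝒜) {δ : ℕ → ℝ} (hδ : Tendsto δ atTop (𝓝 0))
    (c : ℕ → ℝ) :
    BddL0 lam {f | ∃ n, ∃ A ∈ smallSets lam (δ n), f = A.indicator fun _ => c n} := by
  intro ε hε
  obtain ⟨N, hN⟩ := eventually_atTop.1 (hδ.eventually_lt_const hε)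
  refine ⟨∑ n ∈ Finset.range N, |c n|, ?_⟩
  rintro t ht _ ⟨n, A, ⟨hA, hvar⟩, rfl⟩
  have ht0 : 0 ≤ t := (Finset.sum_nonneg fun _ _ => abs_nonneg _).trans ht
  rcases lt_or_ge n N with hn | hn
  · have hct : |c n| ≤ t :=
      (Finset.single_le_sum (fun _ _ => abs_nonneg _) (Finset.mem_range.2 hn)).trans ht
    refine outer_lt_iff.2 ⟨∅, 𝒜.empty_mem, fun ω hω => ?_, (var_empty lam).trans_lt hε⟩
    exact (hω.not_ge ((norm_indicator_le_norm_self (fun _ => c n) ω).trans hct)).elim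
  · refine outer_lt_iff.2 ⟨A, hA, fun ω hω => ?_, hvar.trans (hN n hn)⟩
    by_contra hωA
    have hzero : |A.indicator (fun _ => c n) ω| = 0 := by rw [indicator_of_notMem hωA, abs_zero]
    exact (hzero.trans_le ht0).not_gt hω

theorem HasSmallFiniteUnions.of_bddL0_convexHull
    (h : ∀ K ⊆ L0 lam, BddL0 lam K → BddL0 lam (convexHull ℝ K)) : HasSmallFiniteUnions lam := by
  unfold HasSmallFiniteUnions
  by_contra! hlarge
  obtain ⟨ε, hε, hlarge⟩ := hlarge
  have hfam (n : ℕ) : ∃ F : Finset (Set Ω), F.Nonempty ∧ ↑F ⊆ smallSets lam (1 / ((n : ℝ) + 1)) ∧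
      ε ≤ var lam (⋃₀ ↑F) := by
    obtain ⟨_, hB, hle⟩ := hlarge (1 / ((n : ℝ) + 1)) (by positivity)
    obtain ⟨F, hF, hsub, rfl⟩ := mem_smallUnions_iff.1 hB
    exact ⟨F, hF, hsub, hle⟩
  choose F hF hFδ hvar using hfam
  let K := {f | ∃ n : ℕ, ∃ A ∈ smallSets lam (1 / ((n : ℝ) + 1)),
    f = A.indicator fun _ => (F n).card * (n : ℝ)}
  have hK : K ⊆ L0 lam := by
    rintro _ ⟨n, A, hA, rfl⟩
    exact (isSimple_indicator_const hA.1 _).mem_L0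
  obtain ⟨c, hc⟩ := h K hK (bddL0_indicator_smallSets lam tendsto_one_div_add_atTop_nhds_zero_nat _)
    ε hε
  obtain ⟨n, hn⟩ := exists_nat_gt c
  obtain ⟨g, hg, hle⟩ := exists_mem_forall_sUnion_le (convex_convexHull ℝ K) (hF n) n.cast_nonneg
    fun A hA => subset_convexHull ℝ K ⟨n, A, hFδ n hA, rfl⟩
  obtain ⟨A, -, hsub, hlt⟩ := outer_lt_iff.1 (hc c le_rfl g hg)
  have hunion : ⋃₀ ↑(F n) ⊆ A := fun ω hω =>
    hsub (hn.trans_le ((hle ω hω).trans (le_abs_self _)))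
  linarith [hvar n, var_mono lam hunion]

end Convexity

/-- Theorem 12: the following are equivalent: (i) the convex hull of every bounded subset of
`L⁰(λ)` is bounded in `L⁰(λ)`; (ii) `λ` is strongly discontinuous; (iii) `L⁰(λ)` is a
locally convex topological vector space. -/
theorem stmt_7 {Ω : Type*} {𝒜 : SetAlg Ω} (lam : BAMeasure 𝒜) :
    List.TFAE [
      ∀ K : Set (Ω → ℝ), K ⊆ L0 lam → BddL0 lam K → BddL0 lam (convexHull ℝ K),
      StronglyDiscontinuous lam,
      IsLCTVS lam] := by
  have hbdd : (∀ K : Set (Ω → ℝ), K ⊆ L0 lam → BddL0 lam K → BddL0 lam (convexHull ℝ K)) ↔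
      HasSmallFiniteUnions lam :=
    ⟨HasSmallFiniteUnions.of_bddL0_convexHull, fun h _ _ hK => h.bddL0_convexHull hK⟩
  have hdisc : StronglyDiscontinuous lam ↔ HasSmallFiniteUnions lam :=
    ⟨StronglyDiscontinuous.hasSmallFiniteUnions, HasSmallFiniteUnions.stronglyDiscontinuous⟩
  have hlctvs : IsLCTVS lam ↔ HasSmallFiniteUnions lam :=
    ⟨IsLCTVS.hasSmallFiniteUnions, HasSmallFiniteUnions.isLCTVS⟩
  tfae_have 1 ↔ 2 := hbdd.trans hdisc.symm
  tfae_have 2 ↔ 3 := hdisc.trans hlctvs.symm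
  tfae_finish

end FA
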